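/- arXiv:2512.07002 — 7 statements merged into one kernel-verified Lean document; each statement's English description precedes it below -/
import Mathlib

section
/- Let μ be the evolution algebra structure on ℂ² relative to the basis e₁, e₂ given by μ(e₁,e₁) = e₁ and μ(e₂,e₂) = 0 (the algebra 𝓔₁). Then a 2-cocycle θ ∈ Z²(ℂ²) is a 2-coboundary for μ if and only if θ(e₂,e₂) = 0; that is, B²(μ) consists exactly of those θ ∈ Z²(ℂ²) whose structure matrix has the form (a b; 0 0) with a,b ∈ ℂ. -/
/-- For the evolution algebra `𝓔₁` on `ℂ²` with `e₁² = e₁`, `e₂² = 0`,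
a 2-cocycle `θ` is a 2-coboundary if and only if `θ(e₂,e₂) = 0`. -/
theorem stmt7 (e : Fin 2 → (Fin 2 → ℂ)) (he : ∀ i, e i = Pi.single i 1)
    (μ θ : (Fin 2 → ℂ) →ₗ[ℂ] (Fin 2 → ℂ) →ₗ[ℂ] (Fin 2 → ℂ))
    (hμz : ∀ i j : Fin 2, i ≠ j → μ (e i) (e j) = 0)
    (hμ0 : μ (e 0) (e 0) = e 0) (hμ1 : μ (e 1) (e 1) = 0)
    (hθz : ∀ i j : Fin 2, i ≠ j → θ (e i) (e j) = 0) :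
    (∃ φ : (Fin 2 → ℂ) →ₗ[ℂ] (Fin 2 → ℂ),
        ∀ u v : Fin 2 → ℂ, θ u v = φ (μ u v) - μ u (φ v) - μ (φ u) v) ↔
    θ (e 1) (e 1) = 0 := by
  have hdec : ∀ u : Fin 2 → ℂ, u = u 0 • e 0 + u 1 • e 1 := by
    intro u
    ext i
    fin_cases i <;> simp [he]
  have h01 : (0 : Fin 2) ≠ 1 := by decide
  have hμ : ∀ u v : Fin 2 → ℂ, μ u v = (u 0 * v 0) • e 0 := by
    intro u v
    conv_lhs => rw [hdec u, hdec v]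
    simp only [map_add, map_smul, LinearMap.add_apply, LinearMap.smul_apply, hμ0, hμ1,
      hμz 0 1 h01, hμz 1 0 h01.symm, smul_zero, add_zero, smul_smul]
    rw [mul_comm]
  have hθ : ∀ u v : Fin 2 → ℂ,
      θ u v = (u 0 * v 0) • θ (e 0) (e 0) + (u 1 * v 1) • θ (e 1) (e 1) := by
    intro u v
    conv_lhs => rw [hdec u, hdec v]
    simp only [map_add, map_smul, LinearMap.add_apply, LinearMap.smul_apply,
      hθz 0 1 h01, hθz 1 0 h01.symm, smul_zero, add_zero, zero_add, smul_smul]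
    rw [mul_comm (v 0), mul_comm (v 1)]
  constructor
  · rintro ⟨φ, h⟩
    rw [h, hμ, hμ, hμ]
    simp [he]
  · intro h
    refine ⟨(LinearMap.proj 0 : (Fin 2 → ℂ) →ₗ[ℂ] ℂ).smulRight
      ![-(θ (e 0) (e 0) 0), θ (e 0) (e 0) 1], ?_⟩
    intro u v
    rw [hθ, h, hμ, hμ, hμ]
    generalize θ (e 0) (e 0) = t
    ext i
    fin_cases i
    · simp [he, Matrix.vecHead]
      ring
    · simp [he, Matrix.vecHead, Matrix.vecTail]
end

section
/- Let μ be the evolution algebra structure on ℂ² relative to the basis e₁, e₂ given by μ(e₁,e₁) = e₁ and μ(e₂,e₂) = e₁ (the algebra 𝓔₂). Then a 2-cocycle θ ∈ Z²(ℂ²) is a 2-coboundary for μ if and only if the e₂-coordinate of θ(e₁,e₁) equals the e₂-coordinate of θ(e₂,e₂); that is, B²(μ) = span{(−1 0; 1 0), (0 1; 0 1), (0 0; −2 0)} as structure matrices, a 3-dimensional subspace of Z²(ℂ²). -/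
/-- A bilinear map vanishing on distinct basis vectors is determined by its diagonal values. -/
theorem evol_formula (e : Fin 2 → (Fin 2 → ℂ)) (he : ∀ i, e i = Pi.single i 1)
    (m : (Fin 2 → ℂ) →ₗ[ℂ] (Fin 2 → ℂ) →ₗ[ℂ] (Fin 2 → ℂ))
    (hz : ∀ i j : Fin 2, i ≠ j → m (e i) (e j) = 0) (u v : Fin 2 → ℂ) :
    m u v = (u 0 * v 0) • m (e 0) (e 0) + (u 1 * v 1) • m (e 1) (e 1) := by
  have key : ∀ w : Fin 2 → ℂ, w = w 0 • e 0 + w 1 • e 1 := by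
    intro w
    ext i
    fin_cases i <;> simp [he]
  have h01 := hz 0 1 (by decide)
  have h10 := hz 1 0 (by decide)
  conv_lhs => rw [key u, key v]
  simp only [map_add, map_smul, LinearMap.add_apply, LinearMap.smul_apply, h01, h10,
    smul_zero, add_zero, zero_add, smul_smul, mul_comm]

/-- For the evolution algebra `𝓔₂` on `ℂ²` with `e₁² = e₂² = e₁`,
a 2-cocycle `θ` is a 2-coboundary if and only if the `e₂`-coordinate of `θ(e₁,e₁)`
equals the `e₂`-coordinate of `θ(e₂,e₂)`. -/
theorem stmt8 (e : Fin 2 → (Fin 2 → ℂ)) (he : ∀ i, e i = Pi.single i 1)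
    (μ θ : (Fin 2 → ℂ) →ₗ[ℂ] (Fin 2 → ℂ) →ₗ[ℂ] (Fin 2 → ℂ))
    (hμz : ∀ i j : Fin 2, i ≠ j → μ (e i) (e j) = 0)
    (hμ0 : μ (e 0) (e 0) = e 0) (hμ1 : μ (e 1) (e 1) = e 0)
    (hθz : ∀ i j : Fin 2, i ≠ j → θ (e i) (e j) = 0) :
    (∃ φ : (Fin 2 → ℂ) →ₗ[ℂ] (Fin 2 → ℂ),
        ∀ u v : Fin 2 → ℂ, θ u v = φ (μ u v) - μ u (φ v) - μ (φ u) v) ↔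
    θ (e 0) (e 0) 1 = θ (e 1) (e 1) 1 := by
  have hμ := evol_formula e he μ hμz
  have hθ := evol_formula e he θ hθz
  rw [hμ0, hμ1] at hμ
  constructor
  · rintro ⟨φ, h⟩
    rw [h, h, hμ0, hμ1]
    simp [hμ, he]
  · intro h
    set S := θ (e 0) (e 0)
    set T := θ (e 1) (e 1)
    refine ⟨Matrix.toLin' !![-S 0, -S 1; S 1, (-S 0 - T 0) / 2], fun u v => ?_⟩
    rw [hθ, hμ, hμ, hμ]
    ext i
    fin_cases i
    · simp [he, Matrix.mulVec, dotProduct, Fin.sum_univ_two, Matrix.vecHead, Matrix.vecTail]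
      ring
    · simp [he, Matrix.mulVec, dotProduct, Fin.sum_univ_two, Matrix.vecHead, Matrix.vecTail, ← h]
      ring
end

section
/- Let μ be the evolution algebra structure on ℂ² relative to the basis e₁, e₂ given by μ(e₁,e₁) = e₂ and μ(e₂,e₂) = 0 (the algebra 𝓔₄). Then a 2-cocycle θ ∈ Z²(ℂ²) is a 2-coboundary for μ if and only if θ(e₂,e₂) = 0 and θ(e₁,e₁) ∈ ℂ·e₂; that is, B²(μ) is the 1-dimensional subspace of Z²(ℂ²) spanned by the cocycle with structure matrix (0 1; 0 0). -/
/-- For the evolution algebra `𝓔₄` on `ℂ²` with `e₁² = e₂`, `e₂² = 0`,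
a 2-cocycle `θ` is a 2-coboundary if and only if `θ(e₂,e₂) = 0` and
`θ(e₁,e₁) ∈ ℂ·e₂`. -/
theorem stmt9 (e : Fin 2 → (Fin 2 → ℂ)) (he : ∀ i, e i = Pi.single i 1)
    (μ θ : (Fin 2 → ℂ) →ₗ[ℂ] (Fin 2 → ℂ) →ₗ[ℂ] (Fin 2 → ℂ))
    (hμz : ∀ i j : Fin 2, i ≠ j → μ (e i) (e j) = 0)
    (hμ0 : μ (e 0) (e 0) = e 1) (hμ1 : μ (e 1) (e 1) = 0)
    (hθz : ∀ i j : Fin 2, i ≠ j → θ (e i) (e j) = 0) :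
    (∃ φ : (Fin 2 → ℂ) →ₗ[ℂ] (Fin 2 → ℂ),
        ∀ u v : Fin 2 → ℂ, θ u v = φ (μ u v) - μ u (φ v) - μ (φ u) v) ↔
    (θ (e 1) (e 1) = 0 ∧ ∃ c : ℂ, θ (e 0) (e 0) = c • e 1) := by
  have dec : ∀ u : Fin 2 → ℂ, u = u 0 • e 0 + u 1 • e 1 := by
    intro u
    ext k
    fin_cases k <;> simp [he]
  have exp : ∀ ν : (Fin 2 → ℂ) →ₗ[ℂ] (Fin 2 → ℂ) →ₗ[ℂ] (Fin 2 → ℂ),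
      (∀ i j : Fin 2, i ≠ j → ν (e i) (e j) = 0) → ∀ u v : Fin 2 → ℂ,
      ν u v = (u 0 * v 0) • ν (e 0) (e 0) + (u 1 * v 1) • ν (e 1) (e 1) := by
    intro ν hν u v
    have h1 := hν 0 1 (by decide)
    have h2 := hν 1 0 (by decide)
    conv_lhs => rw [dec u, dec v]
    simp only [map_add, map_smul, LinearMap.add_apply, LinearMap.smul_apply, h1, h2,
      smul_zero, add_zero, zero_add, smul_smul]
    congr 2 <;> ring
  have hμ : ∀ u v : Fin 2 → ℂ, μ u v = (u 0 * v 0) • e 1 := by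
    intro u v
    rw [exp μ hμz u v, hμ0, hμ1, smul_zero, add_zero]
  have e00 : e 0 0 = 1 := by simp [he]
  have e01 : e 0 1 = 0 := by simp [he]
  have e10 : e 1 0 = 0 := by simp [he]
  have e11 : e 1 1 = 1 := by simp [he]
  constructor
  · rintro ⟨φ, hφ⟩
    have hp : φ (e 1) 0 = 0 := by
      have h := hφ (e 0) (e 1)
      rw [hθz 0 1 (by decide)] at h
      have h' := congrFun h 1
      simpa [hμ, e00, e01, e10, e11] using h'
    refine ⟨?_, φ (e 1) 1 - 2 * φ (e 0) 0, ?_⟩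
    · rw [hφ]
      simp [hμ, e10]
    · rw [hφ]
      ext k
      fin_cases k
      · simp [hμ, e00, e10, hp]
      · simp [hμ, e00, e11]
        ring
  · rintro ⟨h1, c, hc⟩
    refine ⟨(LinearMap.proj (R := ℂ) (φ := fun _ : Fin 2 => ℂ) 1).smulRight (c • e 1), ?_⟩
    intro u v
    rw [exp θ hθz u v, h1, hc]
    simp [hμ, e10, e11]
end

section
/- Let a₂, a₃ ∈ ℂ with a₂a₃ ≠ 1, and let μ be the evolution algebra structure on ℂ² relative to the basis e₁, e₂ given by μ(e₁,e₁) = e₁ + a₂e₂ and μ(e₂,e₂) = a₃e₁ + e₂ (the algebra 𝓔₅(a₂,a₃)). Then the space of 2-coboundaries B²(μ) equals the span, as structure matrices, of (−1 −2a₂; a₃ 0) and (0 a₂; −2a₃ −1); explicitly, B²(μ) = { θ ∈ Z²(ℂ²) : θ(e₁,e₁) = −ξ₁e₁ + a₂(ξ₂ − 2ξ₁)e₂ and θ(e₂,e₂) = a₃(ξ₁ − 2ξ₂)e₁ − ξ₂e₂ for some ξ₁,ξ₂ ∈ ℂ }. -/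
/-- For the evolution algebra `𝓔₅(a₂,a₃)` on `ℂ²` with
`e₁² = e₁ + a₂e₂`, `e₂² = a₃e₁ + e₂` and `a₂a₃ ≠ 1`, a 2-cocycle `θ` is a
2-coboundary if and only if `θ(e₁,e₁) = −ξ₁e₁ + a₂(ξ₂ − 2ξ₁)e₂` and
`θ(e₂,e₂) = a₃(ξ₁ − 2ξ₂)e₁ − ξ₂e₂` for some `ξ₁, ξ₂ ∈ ℂ`. -/
theorem stmt10 (a₂ a₃ : ℂ) (ha : a₂ * a₃ ≠ 1)
    (e : Fin 2 → (Fin 2 → ℂ)) (he : ∀ i, e i = Pi.single i 1)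
    (μ θ : (Fin 2 → ℂ) →ₗ[ℂ] (Fin 2 → ℂ) →ₗ[ℂ] (Fin 2 → ℂ))
    (hμz : ∀ i j : Fin 2, i ≠ j → μ (e i) (e j) = 0)
    (hμ0 : μ (e 0) (e 0) = e 0 + a₂ • e 1)
    (hμ1 : μ (e 1) (e 1) = a₃ • e 0 + e 1)
    (hθz : ∀ i j : Fin 2, i ≠ j → θ (e i) (e j) = 0) :
    (∃ φ : (Fin 2 → ℂ) →ₗ[ℂ] (Fin 2 → ℂ),
        ∀ u v : Fin 2 → ℂ, θ u v = φ (μ u v) - μ u (φ v) - μ (φ u) v) ↔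
    (∃ ξ₁ ξ₂ : ℂ,
        θ (e 0) (e 0) = (-ξ₁) • e 0 + (a₂ * (ξ₂ - 2 * ξ₁)) • e 1 ∧
        θ (e 1) (e 1) = (a₃ * (ξ₁ - 2 * ξ₂)) • e 0 + (-ξ₂) • e 1) := by
  have hdec : ∀ u : Fin 2 → ℂ, u = u 0 • e 0 + u 1 • e 1 := by
    intro u
    ext i
    fin_cases i <;> simp [he]
  have hμ01 : μ (e 0) (e 1) = 0 := hμz 0 1 (by decide)
  have hμ10 : μ (e 1) (e 0) = 0 := hμz 1 0 (by decide)
  have hθ01 : θ (e 0) (e 1) = 0 := hθz 0 1 (by decide)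
  have hθ10 : θ (e 1) (e 0) = 0 := hθz 1 0 (by decide)
  have e00 : e 0 0 = 1 := by simp [he]
  have e01 : e 0 1 = 0 := by simp [he]
  have e10 : e 1 0 = 0 := by simp [he]
  have e11 : e 1 1 = 1 := by simp [he]
  constructor
  · rintro ⟨φ, h⟩
    obtain ⟨p, q, hp⟩ : ∃ p q : ℂ, φ (e 0) = p • e 0 + q • e 1 := ⟨_, _, hdec _⟩
    obtain ⟨r, s, hr⟩ : ∃ r s : ℂ, φ (e 1) = r • e 0 + s • e 1 := ⟨_, _, hdec _⟩
    have h01 := h (e 0) (e 1)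
    simp only [hθ01, hμ01, hp, hr, map_add, map_smul, map_zero, LinearMap.add_apply,
      LinearMap.smul_apply, hμ0, hμ1] at h01
    have c0 := congrFun h01 0
    have c1 := congrFun h01 1
    simp [e00, e01, e10, e11] at c0 c1
    have hq : q = 0 := by
      have h1 : q * (1 - a₂ * a₃) = 0 := by linear_combination c1 - a₂ * c0
      rcases mul_eq_zero.mp h1 with h2 | h2
      · exact h2
      · exact absurd (sub_eq_zero.mp h2).symm ha
    have hr0 : r = 0 := by
      rw [hq] at c0
      linear_combination c0
    subst hq hr0
    refine ⟨p, s, ?_, ?_⟩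
    · rw [h]
      simp only [hμ01, hμ10, hp, hr, map_add, map_smul, LinearMap.add_apply,
        LinearMap.smul_apply, hμ0]
      module
    · rw [h]
      simp only [hμ01, hμ10, hp, hr, map_add, map_smul, LinearMap.add_apply,
        LinearMap.smul_apply, hμ1]
      module
  · rintro ⟨p, s, h0, h1⟩
    obtain ⟨φ, hp, hs⟩ : ∃ φ : (Fin 2 → ℂ) →ₗ[ℂ] (Fin 2 → ℂ),
        φ (e 0) = p • e 0 ∧ φ (e 1) = s • e 1 := by
      refine ⟨Matrix.toLin' !![p, 0; 0, s], ?_, ?_⟩ <;>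
      · ext i
        fin_cases i <;>
          simp [Matrix.toLin'_apply, Matrix.mulVec, dotProduct, Fin.sum_univ_two,
            e00, e01, e10, e11]
    refine ⟨φ, fun u v => ?_⟩
    rw [hdec u, hdec v]
    simp only [map_add, map_smul, LinearMap.add_apply, LinearMap.smul_apply, hp, hs,
      hμ0, hμ1, hμ01, hμ10, hθ01, hθ10, h0, h1, map_zero]
    module
end

section
/- Let a₄ ∈ ℂ and let μ be the evolution algebra structure on ℂ² relative to the basis e₁, e₂ given by μ(e₁,e₁) = e₂ and μ(e₂,e₂) = e₁ + a₄e₂ (the algebra 𝓔₆(a₄)). Then the space of 2-coboundaries B²(μ) equals the span, as structure matrices, of (0 1; −2 −a₄) and (0 −2; 1 0); explicitly, B²(μ) = { θ ∈ Z²(ℂ²) : θ(e₁,e₁) = (ξ₂ − 2ξ₁)e₂ and θ(e₂,e₂) = (ξ₁ − 2ξ₂)e₁ − a₄ξ₂e₂ for some ξ₁,ξ₂ ∈ ℂ }. -/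
/-- For the evolution algebra `𝓔₆(a₄)` on `ℂ²` with `e₁² = e₂`,
`e₂² = e₁ + a₄e₂`, a 2-cocycle `θ` is a 2-coboundary if and only if
`θ(e₁,e₁) = (ξ₂ − 2ξ₁)e₂` and `θ(e₂,e₂) = (ξ₁ − 2ξ₂)e₁ − a₄ξ₂e₂` for some
`ξ₁, ξ₂ ∈ ℂ`. -/
theorem stmt11 (a₄ : ℂ)
    (e : Fin 2 → (Fin 2 → ℂ)) (he : ∀ i, e i = Pi.single i 1)
    (μ θ : (Fin 2 → ℂ) →ₗ[ℂ] (Fin 2 → ℂ) →ₗ[ℂ] (Fin 2 → ℂ))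
    (hμz : ∀ i j : Fin 2, i ≠ j → μ (e i) (e j) = 0)
    (hμ0 : μ (e 0) (e 0) = e 1)
    (hμ1 : μ (e 1) (e 1) = e 0 + a₄ • e 1)
    (hθz : ∀ i j : Fin 2, i ≠ j → θ (e i) (e j) = 0) :
    (∃ φ : (Fin 2 → ℂ) →ₗ[ℂ] (Fin 2 → ℂ),
        ∀ u v : Fin 2 → ℂ, θ u v = φ (μ u v) - μ u (φ v) - μ (φ u) v) ↔
    (∃ ξ₁ ξ₂ : ℂ,
        θ (e 0) (e 0) = (ξ₂ - 2 * ξ₁) • e 1 ∧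
        θ (e 1) (e 1) = (ξ₁ - 2 * ξ₂) • e 0 - (a₄ * ξ₂) • e 1) := by
  have h01 := hμz 0 1 (by decide)
  have h10 := hμz 1 0 (by decide)
  have t01 := hθz 0 1 (by decide)
  have t10 := hθz 1 0 (by decide)
  have dec : ∀ u : Fin 2 → ℂ, u = u 0 • e 0 + u 1 • e 1 := by
    intro u
    ext i
    fin_cases i <;> simp [he]
  have e00 : e 0 0 = 1 := by simp [he]
  have e01 : e 0 1 = 0 := by simp [he]
  have e10 : e 1 0 = 0 := by simp [he]
  have e11 : e 1 1 = 1 := by simp [he]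
  constructor
  · rintro ⟨φ, hφ⟩
    have d0 := dec (φ (e 0))
    have d1 := dec (φ (e 1))
    generalize φ (e 0) 0 = p at d0
    generalize φ (e 0) 1 = q at d0
    generalize φ (e 1) 0 = r at d1
    generalize φ (e 1) 1 = s at d1
    have k := hφ (e 0) (e 1)
    have k0 := hφ (e 0) (e 0)
    have k1 := hφ (e 1) (e 1)
    simp only [map_add, map_smul, LinearMap.add_apply, LinearMap.smul_apply, d0, d1, h01, h10,
      t01, hμ0, hμ1, map_zero] at k k0 k1
    have kq := congrFun k 0
    have kr := congrFun k 1
    simp [e00, e01, e10, e11] at kq kr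
    subst kq
    simp at kr
    subst kr
    refine ⟨p, s, ?_, ?_⟩
    · rw [k0]; module
    · rw [k1]; module
  · rintro ⟨x, y, h0, h1⟩
    let φ : (Fin 2 → ℂ) →ₗ[ℂ] (Fin 2 → ℂ) := Matrix.toLin' !![x, 0; 0, y]
    have f0 : φ (e 0) = x • e 0 := by
      ext i
      fin_cases i <;> simp [φ, he, Matrix.mulVec, dotProduct]
    have f1 : φ (e 1) = y • e 1 := by
      ext i
      fin_cases i <;> simp [φ, he, Matrix.mulVec, dotProduct]
    clear_value φ
    refine ⟨φ, fun u v => ?_⟩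
    rw [dec u, dec v]
    generalize u 0 = a
    generalize u 1 = b
    generalize v 0 = c
    generalize v 1 = d
    simp only [map_add, map_smul, LinearMap.add_apply, LinearMap.smul_apply, f0, f1, h01, h10,
      t01, t10, hμ0, hμ1, h0, h1, map_zero]
    module
end

section
/- On ℂ³ with basis e₁, e₂, e₃, consider the nilpotent evolution algebra structures μ_{3,2}: e₁² = e₂, e₂² = e₃² = 0; μ_{3,3}: e₁² = e₂² = e₃, e₃² = 0; and μ_{3,4}: e₁² = e₂, e₂² = e₃, e₃² = 0 (all other products of distinct basis vectors are zero). Then μ_{3,3} is a formal evolution degeneration of μ_{3,4}, μ_{3,2} is a formal evolution degeneration of μ_{3,3}, and μ_{3,2} is a formal evolution degeneration of μ_{3,4}. Witnessing families are given respectively by g_t = diag(1,t,t²) + E₃₂, g_t = diag(t,1,t²), and g_t = diag(1,t,t²), where E₃₂ is the matrix unit with 1 in position (3,2). -/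
/-- `λ` is a formal evolution degeneration of `μ` (relative to the natural basis `e`). -/
def IsEvolutionDegeneration {V : Type*} [NormedAddCommGroup V] [NormedSpace ℂ V]
    {n : ℕ} (e : Fin n → V) (μ lam : V →ₗ[ℂ] V →ₗ[ℂ] V) : Prop :=
  ∃ g : ℝ → (V ≃ₗ[ℂ] V),
    (∀ x : V, ContinuousOn (fun t : ℝ => g t x) (Set.Ioc (0:ℝ) 1)) ∧
    (∀ t ∈ Set.Ioc (0:ℝ) 1, ∀ i j : Fin n, i ≠ j →
      g t (μ ((g t).symm (e i)) ((g t).symm (e j))) = 0) ∧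
    (∀ x y : V, Filter.Tendsto
      (fun t : ℝ => g t (μ ((g t).symm x) ((g t).symm y)))
      (nhdsWithin 0 (Set.Ioc (0:ℝ) 1)) (nhds (lam x y)))

/-- Criterion for an evolution degeneration through explicit matrix families. -/
theorem degen_of_matrices (e : Fin 3 → (Fin 3 → ℂ)) (he : ∀ i, e i = Pi.single i 1)
    (μ lam : (Fin 3 → ℂ) →ₗ[ℂ] (Fin 3 → ℂ) →ₗ[ℂ] (Fin 3 → ℂ))
    (A B : ℂ → Matrix (Fin 3) (Fin 3) ℂ)
    (hA : Continuous A)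
    (hAB : ∀ s, s ≠ 0 → A s * B s = 1) (hBA : ∀ s, s ≠ 0 → B s * A s = 1)
    (R : ℂ → (Fin 3 → ℂ) → (Fin 3 → ℂ) → (Fin 3 → ℂ))
    (hRc : ∀ x y, Continuous (fun s => R s x y))
    (hR : ∀ s, s ≠ 0 → ∀ x y,
      (A s).mulVec (μ ((B s).mulVec x) ((B s).mulVec y)) = R s x y)
    (hRz : ∀ s, ∀ i j : Fin 3, i ≠ j → R s (Pi.single i 1) (Pi.single j 1) = 0)
    (hR0 : ∀ x y, R 0 x y = lam x y) :
    IsEvolutionDegeneration e μ lam := by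
  classical
  let g : ℝ → ((Fin 3 → ℂ) ≃ₗ[ℂ] (Fin 3 → ℂ)) := fun t =>
    if h : (t : ℂ) = 0 then LinearEquiv.refl ℂ _ else
      LinearEquiv.ofLinear (A t).mulVecLin (B t).mulVecLin
        (by rw [← Matrix.mulVecLin_mul, hAB _ h, Matrix.mulVecLin_one])
        (by rw [← Matrix.mulVecLin_mul, hBA _ h, Matrix.mulVecLin_one])
  have hne : ∀ t ∈ Set.Ioc (0:ℝ) 1, (t : ℂ) ≠ 0 := fun t ht => by
    exact_mod_cast ht.1.ne'
  have hg : ∀ t ∈ Set.Ioc (0:ℝ) 1, ∀ x, g t x = (A t).mulVec x := fun t ht x => by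
    simp [g, hne t ht, ht.1.ne']
  have hgs : ∀ t ∈ Set.Ioc (0:ℝ) 1, ∀ x, (g t).symm x = (B t).mulVec x := fun t ht x => by
    simp [g, hne t ht, ht.1.ne']
  have key : ∀ t ∈ Set.Ioc (0:ℝ) 1, ∀ x y,
      g t (μ ((g t).symm x) ((g t).symm y)) = R t x y := fun t ht x y => by
    rw [hg t ht, hgs t ht, hgs t ht, hR _ (hne t ht)]
  refine ⟨g, ?_, ?_, ?_⟩
  · intro x
    have hc : Continuous (fun t : ℝ => (A t).mulVec x) :=
      (hA.comp Complex.continuous_ofReal).matrix_mulVec continuous_const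
    exact hc.continuousOn.congr (fun t ht => hg t ht x)
  · intro t ht i j hij
    rw [key t ht, he, he, hRz _ i j hij]
  · intro x y
    have hc : Continuous (fun t : ℝ => R t x y) := (hRc x y).comp Complex.continuous_ofReal
    have h1 : Filter.Tendsto (fun t : ℝ => R t x y)
        (nhdsWithin 0 (Set.Ioc (0:ℝ) 1)) (nhds (lam x y)) := by
      have h2 := (hc.tendsto 0).mono_left (nhdsWithin_le_nhds (s := Set.Ioc (0:ℝ) 1))
      simpa [hR0] using h2
    refine h1.congr' ?_
    filter_upwards [self_mem_nhdsWithin] with t ht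
    exact (key t ht x y).symm

/-- An evolution structure is determined by the squares of the basis vectors. -/
theorem evolution_formula (e : Fin 3 → (Fin 3 → ℂ)) (he : ∀ i, e i = Pi.single i 1)
    (μ : (Fin 3 → ℂ) →ₗ[ℂ] (Fin 3 → ℂ) →ₗ[ℂ] (Fin 3 → ℂ))
    (hz : ∀ i j : Fin 3, i ≠ j → μ (e i) (e j) = 0) (x y : Fin 3 → ℂ) :
    μ x y = (x 0 * y 0) • μ (e 0) (e 0) + (x 1 * y 1) • μ (e 1) (e 1)
      + (x 2 * y 2) • μ (e 2) (e 2) := by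
  have hx : ∀ x : Fin 3 → ℂ, x = x 0 • e 0 + x 1 • e 1 + x 2 • e 2 := by
    intro x
    ext i
    fin_cases i <;> simp [he]
  conv_lhs => rw [hx x, hx y]
  simp [hz, smul_smul, mul_comm]

/-- Among the nilpotent evolution algebras `μ₃₂ : e₁² = e₂`,
`μ₃₃ : e₁² = e₂² = e₃`, `μ₃₄ : e₁² = e₂, e₂² = e₃` on `ℂ³`, one has the formal
evolution degenerations `μ₃₄ → μ₃₃`, `μ₃₃ → μ₃₂` and `μ₃₄ → μ₃₂`. -/
theorem stmt18 (e : Fin 3 → (Fin 3 → ℂ)) (he : ∀ i, e i = Pi.single i 1)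
    (μ32 μ33 μ34 : (Fin 3 → ℂ) →ₗ[ℂ] (Fin 3 → ℂ) →ₗ[ℂ] (Fin 3 → ℂ))
    (h32z : ∀ i j : Fin 3, i ≠ j → μ32 (e i) (e j) = 0)
    (h32a : μ32 (e 0) (e 0) = e 1) (h32b : μ32 (e 1) (e 1) = 0)
    (h32c : μ32 (e 2) (e 2) = 0)
    (h33z : ∀ i j : Fin 3, i ≠ j → μ33 (e i) (e j) = 0)
    (h33a : μ33 (e 0) (e 0) = e 2) (h33b : μ33 (e 1) (e 1) = e 2)
    (h33c : μ33 (e 2) (e 2) = 0)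
    (h34z : ∀ i j : Fin 3, i ≠ j → μ34 (e i) (e j) = 0)
    (h34a : μ34 (e 0) (e 0) = e 1) (h34b : μ34 (e 1) (e 1) = e 2)
    (h34c : μ34 (e 2) (e 2) = 0) :
    IsEvolutionDegeneration e μ34 μ33 ∧
    IsEvolutionDegeneration e μ33 μ32 ∧
    IsEvolutionDegeneration e μ34 μ32 := by
  have f32 : ∀ x y, μ32 x y = ![0, x 0 * y 0, 0] := fun x y => by
    rw [evolution_formula e he μ32 h32z, h32a, h32b, h32c]
    ext i
    fin_cases i <;> simp [he]
  have f33 : ∀ x y, μ33 x y = ![0, 0, x 0 * y 0 + x 1 * y 1] := fun x y => by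
    rw [evolution_formula e he μ33 h33z, h33a, h33b, h33c]
    ext i
    fin_cases i <;> simp [he]
  have f34 : ∀ x y, μ34 x y = ![0, x 0 * y 0, x 1 * y 1] := fun x y => by
    rw [evolution_formula e he μ34 h34z, h34a, h34b, h34c]
    ext i
    fin_cases i <;> simp [he]
  refine ⟨?_, ?_, ?_⟩
  · refine degen_of_matrices e he μ34 μ33
      (fun s => !![1, 0, 0; 0, s, 0; 0, 1, s ^ 2])
      (fun s => !![1, 0, 0; 0, s⁻¹, 0; 0, -(s⁻¹) ^ 3, (s⁻¹) ^ 2])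
      ?_ ?_ ?_ (fun s x y => ![0, s * (x 0 * y 0), x 0 * y 0 + x 1 * y 1]) ?_ ?_ ?_ ?_
    · refine continuous_matrix fun i j => ?_
      fin_cases i <;> fin_cases j <;> simp <;> fun_prop
    · intro s hs
      ext i j
      fin_cases i <;> fin_cases j <;> simp [Matrix.mul_apply, Fin.sum_univ_three] <;>
        field_simp <;> ring
    · intro s hs
      ext i j
      fin_cases i <;> fin_cases j <;> simp [Matrix.mul_apply, Fin.sum_univ_three] <;>
        field_simp <;> ring
    · intro x y
      refine continuous_pi fun i => ?_
      fin_cases i <;> simp <;> fun_prop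
    · intro s hs x y
      rw [f34]
      ext i
      fin_cases i <;> simp [Matrix.mulVec, dotProduct, Fin.sum_univ_three] <;> field_simp
    · intro s i j hij
      fin_cases i <;> fin_cases j <;> simp at hij ⊢
    · intro x y
      simp [f33]
  · refine degen_of_matrices e he μ33 μ32
      (fun s => !![s, 0, 0; 0, 0, s ^ 2; 0, 1, 0])
      (fun s => !![s⁻¹, 0, 0; 0, 0, 1; 0, (s⁻¹) ^ 2, 0])
      ?_ ?_ ?_ (fun s x y => ![0, x 0 * y 0 + s ^ 2 * (x 2 * y 2), 0]) ?_ ?_ ?_ ?_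
    · refine continuous_matrix fun i j => ?_
      fin_cases i <;> fin_cases j <;> simp <;> fun_prop
    · intro s hs
      ext i j
      fin_cases i <;> fin_cases j <;> simp [Matrix.mul_apply, Fin.sum_univ_three, hs]
    · intro s hs
      ext i j
      fin_cases i <;> fin_cases j <;> simp [Matrix.mul_apply, Fin.sum_univ_three, hs]
    · intro x y
      refine continuous_pi fun i => ?_
      fin_cases i <;> simp <;> fun_prop
    · intro s hs x y
      rw [f33]
      ext i
      fin_cases i <;> simp [Matrix.mulVec, dotProduct, Fin.sum_univ_three] <;> field_simp
    · intro s i j hij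
      fin_cases i <;> fin_cases j <;> simp at hij ⊢
    · intro x y
      simp [f32]
  · refine degen_of_matrices e he μ34 μ32
      (fun s => !![1, 0, 0; 0, 1, 0; 0, 0, s])
      (fun s => !![1, 0, 0; 0, 1, 0; 0, 0, s⁻¹])
      ?_ ?_ ?_ (fun s x y => ![0, x 0 * y 0, s * (x 1 * y 1)]) ?_ ?_ ?_ ?_
    · refine continuous_matrix fun i j => ?_
      fin_cases i <;> fin_cases j <;> simp <;> fun_prop
    · intro s hs
      ext i j
      fin_cases i <;> fin_cases j <;> simp [Matrix.mul_apply, Fin.sum_univ_three, hs]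
    · intro s hs
      ext i j
      fin_cases i <;> fin_cases j <;> simp [Matrix.mul_apply, Fin.sum_univ_three, hs]
    · intro x y
      refine continuous_pi fun i => ?_
      fin_cases i <;> simp <;> fun_prop
    · intro s hs x y
      rw [f34]
      ext i
      fin_cases i <;> simp [Matrix.mulVec, dotProduct, Fin.sum_univ_three]
    · intro s i j hij
      fin_cases i <;> fin_cases j <;> simp at hij ⊢
    · intro x y
      simp [f32]
end

section
/- On ℂ² with basis e₁, e₂, consider the evolution algebra structures μ₁: e₁² = e₁, e₂² = e₂, and μ₃: e₁² = e₂, e₂² = 0 (products of distinct basis vectors are zero). Then μ₃ is NOT a formal evolution degeneration of μ₁: there is no continuous map g : (0,1] → GL(ℂ²) such that each g_t defines a natural basis change of μ₁ (i.e., (g_t·μ₁)(e₁,e₂) = 0 for all t ∈ (0,1]) and (g_t·μ₁)(x,y) → μ₃(x,y) as t → 0⁺ for all x,y ∈ ℂ². (In particular, formal evolution degeneration is not a transitive relation, since μ₁ degenerates to μ₂: e₁² = e₁, e₂² = 0, and μ₂ degenerates to μ₃.) -/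
/-- On `ℂ²`, the evolution algebra `μ₃ : e₁² = e₂, e₂² = 0` is NOT a
formal evolution degeneration of `μ₁ : e₁² = e₁, e₂² = e₂`. -/
theorem stmt19 (e : Fin 2 → (Fin 2 → ℂ)) (he : ∀ i, e i = Pi.single i 1)
    (μ1 μ3 : (Fin 2 → ℂ) →ₗ[ℂ] (Fin 2 → ℂ) →ₗ[ℂ] (Fin 2 → ℂ))
    (h1z : ∀ i j : Fin 2, i ≠ j → μ1 (e i) (e j) = 0)
    (h1a : μ1 (e 0) (e 0) = e 0) (h1b : μ1 (e 1) (e 1) = e 1)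
    (h3z : ∀ i j : Fin 2, i ≠ j → μ3 (e i) (e j) = 0)
    (h3a : μ3 (e 0) (e 0) = e 1) (h3b : μ3 (e 1) (e 1) = 0) :
    ¬ IsEvolutionDegeneration e μ1 μ3 := by
  rintro ⟨g, -, hn, hl⟩
  have hμ : ∀ x y : Fin 2 → ℂ, μ1 x y = fun i => x i * y i := by
    intro x y
    have hd : ∀ z : Fin 2 → ℂ, z = z 0 • e 0 + z 1 • e 1 := by
      intro z
      ext i
      fin_cases i <;> simp [he]
    have h01 := h1z 0 1 (by decide)
    have h10 := h1z 1 0 (by decide)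
    conv_lhs => rw [hd x, hd y]
    simp only [map_add, map_smul, LinearMap.add_apply, LinearMap.smul_apply, h01, h10, h1a, h1b]
    ext i
    fin_cases i <;> simp [he, mul_comm]
  have key : ∀ t ∈ Set.Ioc (0:ℝ) 1,
      g t (μ1 ((g t).symm (e 0)) ((g t).symm (e 0))) 1 = 0 := by
    intro t ht
    have h := hn t ht 0 1 (by decide)
    rw [LinearEquiv.map_eq_zero_iff, hμ] at h
    have ha := congrFun h 0
    have hb := congrFun h 1
    have hv : (g t).symm (e 1) ≠ 0 := by
      rw [Ne, LinearEquiv.map_eq_zero_iff, he]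
      intro h'
      simpa using congrFun h' 1
    have hc : ∃ c : ℂ, μ1 ((g t).symm (e 0)) ((g t).symm (e 0)) = c • (g t).symm (e 0) := by
      rw [hμ]
      generalize (g t).symm (e 0) = u at *
      generalize (g t).symm (e 1) = v at *
      simp only [Pi.zero_apply, mul_eq_zero] at ha hb
      rcases ha with ha | ha
      · refine ⟨u 1, ?_⟩
        ext i
        fin_cases i <;> simp [ha]
      · rcases hb with hb | hb
        · refine ⟨u 0, ?_⟩
          ext i
          fin_cases i <;> simp [hb]
        · refine absurd ?_ hv
          ext i
          fin_cases i <;> simp [ha, hb]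
    obtain ⟨c, hc⟩ := hc
    rw [hc, map_smul, LinearEquiv.apply_symm_apply, he]
    simp
  have hlim := (tendsto_pi_nhds.1 (hl (e 0) (e 0))) 1
  have hne : (nhdsWithin (0:ℝ) (Set.Ioc (0:ℝ) 1)).NeBot := by
    rw [nhdsWithin_Ioc_eq_nhdsGT (by norm_num : (0:ℝ) < 1)]
    infer_instance
  have h0 : Filter.Tendsto (fun t : ℝ => g t (μ1 ((g t).symm (e 0)) ((g t).symm (e 0))) 1)
      (nhdsWithin (0:ℝ) (Set.Ioc (0:ℝ) 1)) (nhds 0) := by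
    refine tendsto_const_nhds.congr' ?_
    filter_upwards [self_mem_nhdsWithin] with t ht
    exact (key t ht).symm
  have := tendsto_nhds_unique hlim h0
  rw [h3a, he] at this
  simp at this
end
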